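/- (Pointwise energy-dissipation inequality for the standard linear FrBD_{n+1}-GM model; core of Lemma 5.1.) Let Ω ⊆ ℝ³ be open (with coordinates (x, y, s)), let ε ≥ 0, let v̄ : Ω → ℝ² be a function, V_r : ℝ → ℝ with V_r(s) > 0, and let z, f_1, …, f_n : Ω → ℝ² be differentiable functions satisfying the standard linear FrBD_{n+1}-GM equations at every point of Ω. Define the energy density q := ½ zᵀ K₀ z + ½ Σ_{i=1}^n f_iᵀ K_i⁻¹ f_i and the total force f := K₀ z + Σ_{i=1}^n f_i. Then at every point of Ω one has ∂q/∂s − ∂q/∂x ≤ −fᵀ v̄. -/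

import Mathlib

open Matrix

/-- The regularised Euclidean norm `‖y‖_{2,ε} = √(‖y‖₂² + ε)` on `ℝ²`. -/
noncomputable def regNorm (ε : ℝ) (y : Fin 2 → ℝ) : ℝ := Real.sqrt (y ⬝ᵥ y + ε)

lemma quad_hasDerivAt (A : Matrix (Fin 2) (Fin 2) ℝ) (hA : A.PosDef) (u : ℝ → Fin 2 → ℝ)
    (u' : Fin 2 → ℝ) (t : ℝ) (hu : HasDerivAt u u' t) :
    HasDerivAt (fun t' => u t' ⬝ᵥ A.mulVec (u t')) (2 * (u t ⬝ᵥ A.mulVec u')) t := by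
  have h0 := (hasDerivAt_pi.1 hu) 0
  have h1 := (hasDerivAt_pi.1 hu) 1
  have hs : A 1 0 = A 0 1 := by
    have := hA.1.apply 0 1
    simpa using this
  simp only [dotProduct, mulVec, Fin.sum_univ_two]
  refine ((h0.mul ((h0.const_mul (A 0 0)).add (h1.const_mul (A 0 1)))).add
    (h1.mul ((h0.const_mul (A 1 0)).add (h1.const_mul (A 1 1))))).congr_deriv ?_
  simp only [Pi.add_apply, hs]
  ring

lemma posDef_quad_nonneg (A : Matrix (Fin 2) (Fin 2) ℝ) (hA : A.PosDef) (u : Fin 2 → ℝ) :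
    0 ≤ u ⬝ᵥ A.mulVec u := by
  simpa using hA.posSemidef.dotProduct_mulVec_nonneg u

lemma sq_inv_quad_nonneg (A : Matrix (Fin 2) (Fin 2) ℝ) (hA : A.PosDef) (u : Fin 2 → ℝ) :
    0 ≤ u ⬝ᵥ (A * A)⁻¹.mulVec u := by
  have hs : (A⁻¹)ᵀ = A⁻¹ := by
    have := hA.inv.1
    simpa [Matrix.IsHermitian, conjTranspose_eq_transpose_of_trivial] using this
  rw [Matrix.mul_inv_rev, ← mulVec_mulVec, dotProduct_mulVec, ← mulVec_transpose, hs]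
  simp only [dotProduct]
  exact Finset.sum_nonneg fun i _ => mul_self_nonneg _

lemma relax_apply (K C : Matrix (Fin 2) (Fin 2) ℝ) (hK : K.PosDef)
    (u w : Fin 2 → ℝ) (c : ℝ) :
    K⁻¹.mulVec (-(c • ((C * K⁻¹)⁻¹.mulVec u)) + K.mulVec w) = -(c • C⁻¹.mulVec u) + w := by
  have hd : IsUnit K.det := (Matrix.isUnit_iff_isUnit_det K).1 hK.isUnit
  rw [Matrix.mul_inv_rev, Matrix.nonsing_inv_nonsing_inv _ hd, mulVec_add, mulVec_neg, mulVec_smul,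
    mulVec_mulVec, mulVec_mulVec, ← Matrix.mul_assoc, Matrix.nonsing_inv_mul _ hd, Matrix.one_mul,
    one_mulVec]

/-- Pointwise energy-dissipation inequality for the standard linear FrBD_{n+1}-GM model
(core of Lemma 5.1): along the characteristic field `D = ∂/∂s − ∂/∂x`, the energy density
`q = ½ zᵀK₀z + ½ Σᵢ fᵢᵀKᵢ⁻¹fᵢ` satisfies `∂q/∂s − ∂q/∂x ≤ −fᵀ v̄` at every point of `Ω`. -/
theorem frbd_gm_pointwise_dissipation (n : ℕ)
    (K₀ : Matrix (Fin 2) (Fin 2) ℝ) (K C : Fin n → Matrix (Fin 2) (Fin 2) ℝ)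
    (hK₀ : K₀.PosDef) (hK : ∀ i, (K i).PosDef) (hC : ∀ i, (C i).PosDef)
    (Mm : (Fin 2 → ℝ) → Matrix (Fin 2) (Fin 2) ℝ) (hMm : ∀ y, (Mm y).PosDef)
    (ε : ℝ) (hε : 0 ≤ ε)
    (Ω : Set (ℝ × ℝ × ℝ)) (hΩ : IsOpen Ω)
    (vb : ℝ → ℝ → ℝ → (Fin 2 → ℝ))
    (Vr : ℝ → ℝ) (hVr : ∀ s, 0 < Vr s)
    (z : ℝ → ℝ → ℝ → (Fin 2 → ℝ)) (f : Fin n → ℝ → ℝ → ℝ → (Fin 2 → ℝ))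
    (zx zs : ℝ → ℝ → ℝ → (Fin 2 → ℝ)) (fx fs : Fin n → ℝ → ℝ → ℝ → (Fin 2 → ℝ))
    -- partial derivatives of the states
    (hzx : ∀ x y s, (x, y, s) ∈ Ω → HasDerivAt (fun x' => z x' y s) (zx x y s) x)
    (hzs : ∀ x y s, (x, y, s) ∈ Ω → HasDerivAt (fun s' => z x y s') (zs x y s) s)
    (hfx : ∀ i x y s, (x, y, s) ∈ Ω → HasDerivAt (fun x' => f i x' y s) (fx i x y s) x)
    (hfs : ∀ i x y s, (x, y, s) ∈ Ω → HasDerivAt (fun s' => f i x y s') (fs i x y s) s)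
    -- the standard linear FrBD_{n+1}-GM equations: D z = Ψ f − v̄
    (hPDEz : ∀ x y s, (x, y, s) ∈ Ω →
      zs x y s - zx x y s =
        -(((Vr s)⁻¹ *
            regNorm ε ((Mm (Vr s • vb x y s)).mulVec (Vr s • vb x y s))) •
          ((Mm (Vr s • vb x y s) * Mm (Vr s • vb x y s))⁻¹.mulVec
            (K₀.mulVec (z x y s) + ∑ i, f i x y s))) - vb x y s)
    -- and D fᵢ = −(1/V_r) τᵢ⁻¹ fᵢ + Kᵢ D z
    (hPDEf : ∀ i x y s, (x, y, s) ∈ Ω →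
      fs i x y s - fx i x y s =
        -((Vr s)⁻¹ • ((C i * (K i)⁻¹)⁻¹.mulVec (f i x y s))) +
          (K i).mulVec (zs x y s - zx x y s)) :
    ∀ x y s, (x, y, s) ∈ Ω →
      ∃ qx qs : ℝ,
        HasDerivAt (fun x' => (1/2) * (z x' y s ⬝ᵥ K₀.mulVec (z x' y s)) +
          (1/2) * ∑ i, f i x' y s ⬝ᵥ (K i)⁻¹.mulVec (f i x' y s)) qx x ∧
        HasDerivAt (fun s' => (1/2) * (z x y s' ⬝ᵥ K₀.mulVec (z x y s')) +
          (1/2) * ∑ i, f i x y s' ⬝ᵥ (K i)⁻¹.mulVec (f i x y s')) qs s ∧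
        qs - qx ≤ -((K₀.mulVec (z x y s) + ∑ i, f i x y s) ⬝ᵥ vb x y s) := by
  intro x y s hp
  refine ⟨_, _,
    ((quad_hasDerivAt K₀ hK₀ _ _ _ (hzx x y s hp)).const_mul (1/2)).add
      ((HasDerivAt.fun_sum fun i _ =>
        quad_hasDerivAt (K i)⁻¹ (hK i).inv _ _ _ (hfx i x y s hp)).const_mul (1/2)),
    ((quad_hasDerivAt K₀ hK₀ _ _ _ (hzs x y s hp)).const_mul (1/2)).add
      ((HasDerivAt.fun_sum fun i _ =>
        quad_hasDerivAt (K i)⁻¹ (hK i).inv _ _ _ (hfs i x y s hp)).const_mul (1/2)), ?_⟩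
  have hz := hPDEz x y s hp
  have hV : 0 ≤ (Vr s)⁻¹ := (inv_pos.2 (hVr s)).le
  set d := zs x y s - zx x y s with hd
  set F := K₀.mulVec (z x y s) + ∑ i, f i x y s with hF
  have key : ∀ i, f i x y s ⬝ᵥ (K i)⁻¹.mulVec (fs i x y s) -
      f i x y s ⬝ᵥ (K i)⁻¹.mulVec (fx i x y s) ≤ f i x y s ⬝ᵥ d := by
    intro i
    rw [← dotProduct_sub, ← mulVec_sub, hPDEf i x y s hp, relax_apply _ _ (hK i), dotProduct_add,
      dotProduct_neg, dotProduct_smul, smul_eq_mul]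
    have := mul_nonneg hV (posDef_quad_nonneg _ (hC i).inv (f i x y s))
    linarith
  have hsum := Finset.sum_le_sum fun i (_ : i ∈ Finset.univ) => key i
  rw [Finset.sum_sub_distrib, ← sum_dotProduct] at hsum
  have hsym : z x y s ⬝ᵥ K₀.mulVec (zs x y s) - z x y s ⬝ᵥ K₀.mulVec (zx x y s)
      = K₀.mulVec (z x y s) ⬝ᵥ d := by
    have ht : K₀ᵀ = K₀ := by
      have := hK₀.1
      simpa [Matrix.IsHermitian, conjTranspose_eq_transpose_of_trivial] using this
    rw [← dotProduct_sub, ← mulVec_sub, dotProduct_mulVec, ← mulVec_transpose, ht]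
  have hFd : F ⬝ᵥ d = K₀.mulVec (z x y s) ⬝ᵥ d + (∑ i, f i x y s) ⬝ᵥ d := by
    rw [hF, add_dotProduct]
  have hle : F ⬝ᵥ d ≤ -(F ⬝ᵥ vb x y s) := by
    rw [hz, dotProduct_sub, dotProduct_neg, dotProduct_smul, smul_eq_mul]
    have hr : 0 ≤ regNorm ε ((Mm (Vr s • vb x y s)).mulVec (Vr s • vb x y s)) :=
      Real.sqrt_nonneg _
    have := mul_nonneg (mul_nonneg hV hr)
      (sq_inv_quad_nonneg _ (hMm (Vr s • vb x y s)) F)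
    linarith
  rw [← Finset.mul_sum, ← Finset.mul_sum]
  linarith
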